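/- arXiv:2506.17042 — 2 statements merged into one kernel-verified Lean document; each statement's English description precedes it below -/
import Mathlib

section
/- Let c > 0, a > 0, γ > 0 and b ∈ ℕ. Then lim_{n→∞} sup_{x ∈ ℝ} | n^{−(1+b)/2} · Σ_{j ∈ ℤ, |j − n x| ≤ a n^{1/2+γ}} |j − n x|^b · exp(−c (j − n x)² / n) − ∫_ℝ |y|^b e^{−c y²} dy | = 0. In other words, the one-dimensional Gaussian-polynomial lattice sum over the window of radius a n^{1/2+γ} equals n^{(1+b)/2} ( ∫_ℝ |y|^b e^{−c y²} dy + o(1) ), uniformly in the center x ∈ ℝ. (This is the one-dimensional comparison established in the proof of Lemma 2.4 of the paper.) -/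
/-!
Evaluating `f` at the lattice point of `h * (ℤ - t)` just below `y` gives a step function of `y`
whose integral is the Riemann sum `h * ∑ j, f (h * (j - t))`. As `h → 0` the lattice point tends to
`y` whatever `t` is, so dominated convergence gives the limit. Running it along `atTop ×ˢ ⊤`,
where the second coordinate is the centre, makes the convergence uniform in the centre.
For the theorem take `h = 1 / √n` and `f y = |y| ^ b * exp (-c * y ^ 2)`: in the variable
`(j - n * x) / √n` the window has radius `a * n ^ γ → ∞`.
-/

open MeasureTheory Filter Topology

section LatticeSums

/-- The largest point of the shifted lattice `h * (ℤ - t)` that is at most `y`, for mesh `h > 0`. -/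
noncomputable def latticeFloor (h t y : ℝ) : ℝ := h * (⌊y / h + t⌋ - t)

theorem abs_latticeFloor_sub_le {h : ℝ} (hh : 0 < h) (t y : ℝ) : |latticeFloor h t y - y| ≤ h := by
  have hfract : latticeFloor h t y - y = -(h * Int.fract (y / h + t)) := by
    rw [latticeFloor, Int.fract]
    field_simp
    ring
  rw [hfract, abs_neg, abs_mul, abs_of_pos hh, Int.abs_fract]
  exact mul_le_of_le_one_right hh.le (Int.fract_lt_one _).le

theorem stronglyMeasurable_comp_latticeFloor {X : Type*} [TopologicalSpace X] (f : ℝ → X)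
    (h t : ℝ) : StronglyMeasurable fun y ↦ f (latticeFloor h t y) :=
  (StronglyMeasurable.of_discrete (f := fun j : ℤ ↦ f (h * (j - t)))).comp_measurable
    (Int.measurable_floor.comp (by fun_prop))

theorem latticeFloor_mul_sub {h : ℝ} (hh : h ≠ 0) (t u : ℝ) :
    latticeFloor h t (h * (u - t)) = h * (⌊u⌋ - t) := by
  rw [latticeFloor, mul_div_cancel_left₀ _ hh, sub_add_cancel]

theorem tendsto_latticeFloor {ι : Type*} {l : Filter ι} {h : ι → ℝ} (hh : Tendsto h l (𝓝[>] 0))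
    (t : ι → ℝ) (y : ℝ) : Tendsto (fun i ↦ latticeFloor (h i) (t i) y) l (𝓝 y) := by
  rw [tendsto_nhdsWithin_iff] at hh
  rw [tendsto_iff_norm_sub_tendsto_zero]
  refine squeeze_zero' (.of_forall fun _ ↦ norm_nonneg _) ?_ hh.1
  filter_upwards [hh.2] with i hi using abs_latticeFloor_sub_le hi (t i) y

variable {E : Type*} [NormedAddCommGroup E] [NormedSpace ℝ E] [CompleteSpace E]

theorem integral_comp_floor {g : ℤ → E} (hg : Integrable fun u : ℝ ↦ g ⌊u⌋) :
    ∫ u : ℝ, g ⌊u⌋ = ∑' j : ℤ, g j := by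
  have hcell (j : ℤ) : ∫ u in Set.Ico (j : ℝ) (j + 1), g ⌊u⌋ = g j := by
    have hconst : Set.EqOn (fun u : ℝ ↦ g ⌊u⌋) (fun _ ↦ g j) (Set.Ico (j : ℝ) (j + 1)) :=
      fun u hu ↦ congrArg g (Int.floor_eq_iff.2 hu)
    rw [setIntegral_congr_fun measurableSet_Ico hconst]
    simp
  calc ∫ u : ℝ, g ⌊u⌋ = ∫ u in ⋃ j : ℤ, Set.Ico (j : ℝ) (j + 1), g ⌊u⌋ := by
        rw [iUnion_Ico_intCast, setIntegral_univ]
    _ = ∑' j : ℤ, ∫ u in Set.Ico (j : ℝ) (j + 1), g ⌊u⌋ :=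
        integral_iUnion (fun _ ↦ measurableSet_Ico) (Set.pairwise_disjoint_Ico_intCast ℝ)
          hg.integrableOn
    _ = ∑' j : ℤ, g j := tsum_congr hcell

theorem integral_comp_latticeFloor {f : ℝ → E} {h t : ℝ} (hh : 0 < h)
    (hf : Integrable fun y ↦ f (latticeFloor h t y)) :
    ∫ y, f (latticeFloor h t y) = h • ∑' j : ℤ, f (h * (j - t)) := by
  have hfloor : Integrable fun u : ℝ ↦ f (h * (⌊u⌋ - t)) := by
    simpa only [latticeFloor_mul_sub hh.ne'] using (hf.comp_mul_left' hh.ne').comp_sub_right t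
  calc ∫ y, f (latticeFloor h t y)
      = h • ∫ u, f (latticeFloor h t (h * u)) := by
        rw [Measure.integral_comp_mul_left (fun y ↦ f (latticeFloor h t y)),
          abs_of_pos (inv_pos.2 hh), smul_inv_smul₀ hh.ne']
    _ = h • ∫ u, f (latticeFloor h t (h * (u - t))) := by
        rw [integral_sub_right_eq_self (fun u ↦ f (latticeFloor h t (h * u)))]
    _ = h • ∑' j : ℤ, f (h * (j - t)) := by
        simp only [latticeFloor_mul_sub hh.ne',
          integral_comp_floor (g := fun j ↦ f (h * (j - t))) hfloor]

theorem tendsto_smul_tsum_indicator_lattice {ι : Type*} {l : Filter ι} [l.IsCountablyGenerated]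
    {f : ℝ → E} {bound : ℝ → ℝ} {δ : ℝ} {h R : ι → ℝ} (hf : Continuous f)
    (hbound : Integrable bound) (hδ : 0 < δ)
    (hf_le : ∀ z y, |z - y| ≤ δ → ‖f z‖ ≤ bound y)
    (hh : Tendsto h l (𝓝[>] 0)) (hR : Tendsto R l atTop) (t : ι → ℝ) :
    Tendsto (fun i ↦ h i • ∑' j : ℤ, {z | |z| ≤ R i}.indicator f (h i * (j - t i))) l
      (𝓝 (∫ y, f y)) := by
  let step (i : ι) (y : ℝ) : E := {z | |z| ≤ R i}.indicator f (latticeFloor (h i) (t i) y)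
  have hh_pos : ∀ᶠ i in l, 0 < h i := (tendsto_nhdsWithin_iff.1 hh).2
  have hh_le : ∀ᶠ i in l, h i ≤ δ := (tendsto_nhdsWithin_iff.1 hh).1.eventually_le_const hδ
  have hstep_meas (i : ι) : AEStronglyMeasurable (step i) :=
    (stronglyMeasurable_comp_latticeFloor _ _ _).aestronglyMeasurable
  have hstep_le : ∀ᶠ i in l, ∀ y, ‖step i y‖ ≤ bound y := by
    filter_upwards [hh_pos, hh_le] with i hi_pos hi_le y
    exact (norm_indicator_le_norm_self _ _).trans
      (hf_le _ _ ((abs_latticeFloor_sub_le hi_pos _ _).trans hi_le))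
  have hstep_lim (y : ℝ) : Tendsto (fun i ↦ step i y) l (𝓝 (f y)) := by
    have hfloor := tendsto_latticeFloor hh t y
    refine ((hf.tendsto y).comp hfloor).congr' ?_
    filter_upwards [hfloor.abs.eventually_le_const (lt_add_one |y|),
      hR.eventually_ge_atTop (|y| + 1)] with i hi_abs hi_R
    have hmem : latticeFloor (h i) (t i) y ∈ {z | |z| ≤ R i} := hi_abs.trans hi_R
    exact (Set.indicator_of_mem hmem f).symm
  refine (tendsto_integral_filter_of_dominated_convergence bound (.of_forall hstep_meas)
    (hstep_le.mono fun _ h_le ↦ .of_forall h_le) hbound (.of_forall hstep_lim)).congr' ?_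
  filter_upwards [hh_pos, hstep_le] with i hi_pos hi_le
  exact integral_comp_latticeFloor hi_pos
    (hbound.mono' (hstep_meas i) (.of_forall hi_le))

end LatticeSums

section GaussianMonomial

/-- The density `|y| ^ b * exp (-c * y ^ 2)` whose integral is the `b`-th absolute moment of the
Gaussian `exp (-c * y ^ 2)`. -/
noncomputable def gaussianMonomial (c : ℝ) (b : ℕ) (y : ℝ) : ℝ := |y| ^ b * Real.exp (-c * y ^ 2)

theorem continuous_gaussianMonomial (c : ℝ) (b : ℕ) : Continuous (gaussianMonomial c b) := by
  unfold gaussianMonomial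
  fun_prop

theorem integrable_gaussianMonomial {c : ℝ} (hc : 0 < c) (b : ℕ) :
    Integrable (gaussianMonomial c b) := by
  have hb : (-1 : ℝ) < b := neg_one_lt_zero.trans_le b.cast_nonneg
  refine (integrable_rpow_mul_exp_neg_mul_sq hc hb).norm.congr (.of_forall fun y ↦ ?_)
  simp [gaussianMonomial]

theorem neg_mul_sq_le_of_abs_sub_le_one {c z y : ℝ} (hc : 0 ≤ c) (hzy : |z - y| ≤ 1) :
    -c * z ^ 2 ≤ c + -(c / 2) * y ^ 2 := by
  have hsq : (z - y) ^ 2 ≤ 1 := (sq_le_one_iff_abs_le_one _).2 hzy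
  have hy : y ^ 2 ≤ 2 * (z ^ 2 + 1) := by nlinarith [sq_nonneg (2 * z - y)]
  nlinarith [mul_le_mul_of_nonneg_left hy hc]

theorem gaussianMonomial_le_of_abs_sub_le_one {c z y : ℝ} (hc : 0 ≤ c) (b : ℕ)
    (hzy : |z - y| ≤ 1) :
    gaussianMonomial c b z ≤ 2 ^ (b - 1) * Real.exp c *
      (gaussianMonomial (c / 2) b y + gaussianMonomial (c / 2) 0 y) := by
  have habs : |z| ≤ |y| + 1 := by linarith [abs_sub_abs_le_abs_sub z y]
  calc |z| ^ b * Real.exp (-c * z ^ 2)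
      ≤ (|y| + 1) ^ b * Real.exp (c + -(c / 2) * y ^ 2) := by
        gcongr
        exact neg_mul_sq_le_of_abs_sub_le_one hc hzy
    _ ≤ 2 ^ (b - 1) * (|y| ^ b + 1 ^ b) * Real.exp (c + -(c / 2) * y ^ 2) := by
        gcongr
        exact add_pow_le (abs_nonneg y) zero_le_one b
    _ = 2 ^ (b - 1) * Real.exp c *
          (gaussianMonomial (c / 2) b y + gaussianMonomial (c / 2) 0 y) := by
        rw [Real.exp_add, gaussianMonomial, gaussianMonomial]
        ring

theorem rpow_neg_one_add_div_two {x : ℝ} (hx : 0 ≤ x) (b : ℕ) :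
    x ^ (-((1 + (b : ℝ)) / 2)) = (√x)⁻¹ * (√x ^ b)⁻¹ := by
  rw [Real.rpow_neg hx, ← mul_inv, ← pow_succ', Real.sqrt_eq_rpow, ← Real.rpow_mul_natCast hx]
  congr 2
  push_cast
  ring

theorem gaussianMonomial_inv_sqrt_mul {x : ℝ} (hx : 0 ≤ x) (c : ℝ) (b : ℕ) (u : ℝ) :
    gaussianMonomial c b ((√x)⁻¹ * u) = (√x ^ b)⁻¹ * (|u| ^ b * Real.exp (-c * u ^ 2 / x)) := by
  rw [gaussianMonomial, abs_mul, abs_of_nonneg (inv_nonneg.2 x.sqrt_nonneg), mul_pow, mul_pow,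
    inv_pow, inv_pow, Real.sq_sqrt hx, mul_assoc]
  congr 3
  ring

theorem abs_inv_sqrt_mul_le_iff {x : ℝ} (hx : 0 < x) (a γ u : ℝ) :
    |(√x)⁻¹ * u| ≤ a * x ^ γ ↔ |u| ≤ a * x ^ (1 / 2 + γ) := by
  have hs : 0 < √x := Real.sqrt_pos.2 hx
  rw [abs_mul, abs_of_pos (inv_pos.2 hs), inv_mul_le_iff₀ hs, Real.rpow_add hx,
    ← Real.sqrt_eq_rpow, mul_left_comm]

theorem rpow_mul_tsum_indicator_eq {x : ℝ} (hx : 0 < x) (c a γ : ℝ) (b : ℕ) (t : ℝ) :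
    x ^ (-((1 + (b : ℝ)) / 2)) *
        ∑' j : ℤ, {j : ℤ | |(j : ℝ) - t| ≤ a * x ^ (1 / 2 + γ)}.indicator
          (fun j ↦ |(j : ℝ) - t| ^ b * Real.exp (-c * ((j : ℝ) - t) ^ 2 / x)) j =
      (√x)⁻¹ • ∑' j : ℤ, {z | |z| ≤ a * x ^ γ}.indicator (gaussianMonomial c b)
        ((√x)⁻¹ * (j - t)) := by
  rw [rpow_neg_one_add_div_two hx.le, mul_assoc, ← tsum_mul_left, smul_eq_mul]
  congr! 3 with j
  simp only [Set.indicator_apply, Set.mem_ofPred_eq, abs_inv_sqrt_mul_le_iff hx,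
    gaussianMonomial_inv_sqrt_mul hx.le, mul_ite, mul_zero]

theorem tendsto_inv_sqrt_smul_tsum_gaussianMonomial {c a γ : ℝ} (hc : 0 < c) (ha : 0 < a)
    (hγ : 0 < γ) (b : ℕ) {ι : Type*} {l : Filter ι} [l.IsCountablyGenerated] {x : ι → ℝ}
    (hx : Tendsto x l atTop) (t : ι → ℝ) :
    Tendsto (fun i ↦ (√(x i))⁻¹ • ∑' j : ℤ,
      {z | |z| ≤ a * x i ^ γ}.indicator (gaussianMonomial c b) ((√(x i))⁻¹ * (j - t i))) l
      (𝓝 (∫ y, gaussianMonomial c b y)) := by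
  have hbound := ((integrable_gaussianMonomial (half_pos hc) b).add
    (integrable_gaussianMonomial (half_pos hc) 0)).const_mul (2 ^ (b - 1) * Real.exp c)
  refine tendsto_smul_tsum_indicator_lattice (continuous_gaussianMonomial c b) hbound one_pos
    (fun z y hzy ↦ ?_) (tendsto_inv_atTop_nhdsGT_zero.comp (Real.tendsto_sqrt_atTop.comp hx))
    (((tendsto_rpow_atTop hγ).comp hx).const_mul_atTop ha) t
  have hnonneg : 0 ≤ gaussianMonomial c b z := by
    unfold gaussianMonomial
    positivity
  rw [Real.norm_of_nonneg hnonneg]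
  exact gaussianMonomial_le_of_abs_sub_le_one hc.le b hzy

end GaussianMonomial

/-- One-dimensional comparison from the proof of Lemma 2.4: uniformly in the
center `x ∈ ℝ`, the normalized Gaussian-polynomial lattice sum over the window
`|j − n x| ≤ a n^{1/2+γ}` converges to `∫_ℝ |y|^b e^{−c y²} dy` as `n → ∞`. -/
theorem stmt_6 (c a γ : ℝ) (hc : 0 < c) (ha : 0 < a) (hγ : 0 < γ) (b : ℕ) :
    ∀ ε : ℝ, 0 < ε → ∃ N : ℕ, ∀ n : ℕ, N ≤ n → ∀ x : ℝ,
      |(n : ℝ) ^ (-((1 + (b : ℝ)) / 2)) *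
          (∑' j : ℤ,
            Set.indicator
              {j : ℤ | |(j : ℝ) - n * x| ≤ a * (n : ℝ) ^ ((1 : ℝ) / 2 + γ)}
              (fun j => |(j : ℝ) - n * x| ^ b * Real.exp (-c * ((j : ℝ) - n * x) ^ 2 / n)) j) -
          ∫ y : ℝ, |y| ^ b * Real.exp (-c * y ^ 2)| ≤ ε := by
  intro ε hε
  have hn_atTop : Tendsto (fun p : ℕ × ℝ ↦ (p.1 : ℝ)) (atTop ×ˢ ⊤) atTop :=
    tendsto_natCast_atTop_atTop.comp tendsto_fst
  have hlim := tendsto_inv_sqrt_smul_tsum_gaussianMonomial hc ha hγ b hn_atTop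
    fun p ↦ p.1 * p.2
  have hclose := mem_prod_top.1 (hlim.eventually (Metric.closedBall_mem_nhds _ hε))
  obtain ⟨N, hN⟩ := eventually_atTop.1 ((eventually_gt_atTop 0).and hclose)
  refine ⟨N, fun n hn x ↦ ?_⟩
  obtain ⟨hn_pos, hn_close⟩ := hN n hn
  rw [rpow_mul_tsum_indicator_eq (Nat.cast_pos.2 hn_pos)]
  exact hn_close x
end

section
/- Let U ⊆ ℝ^r be open, δ₀ ∈ U, and let ψ : U → ℝ be three times continuously differentiable with ∇ψ(δ₀) = 0 and with negative definite Hessian at δ₀. Let q > 0 and 0 < γ < 1/6. Then there exist constants 0 < A ≤ B and N ∈ ℕ such that for all n ≥ N: A · n^{r/2} · e^{n q ψ(δ₀)} ≤ Σ_{m ∈ ℤ^r, ‖m/n − δ₀‖ ≤ n^{−1/2+γ}} e^{n q ψ(m/n)} ≤ B · n^{r/2} · e^{n q ψ(δ₀)}. (This discrete Laplace-method asymptotic is established in the proof of Theorem 2.1 of the paper, with ψ(δ) = ⟨δ, s_p⟩ − φ(δ) and q = p, and yields ‖k_n‖_{ℓ^p}^p ≍ n^{−r(p−1)/2} ϱ^{np}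 e^{npψ(δ_p)} on the critical region.) -/
/-!
Near the nondegenerate maximum `δ₀`, second-order Taylor expansion gives
`-C ‖x - δ₀‖² ≤ ψ x - ψ δ₀ ≤ -c ‖x - δ₀‖²` with `0 < c` and `0 < C`. After dividing by
`e^{n q ψ(δ₀)}` the summand at `m` is therefore squeezed between two Gaussians in
`(m - n δ₀) / √n`. Summing the upper Gaussian over all of `ℤ^r` factors into `r` one-dimensional
sums, each of order `√n`. For the lower bound it is enough to keep the points of a cube of side
comparable to `√n` around `n δ₀`: there are at least a constant times `n^{r/2}` of them, and on
each the Gaussian is bounded below.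
-/

open Filter Topology Asymptotics Finset

section SecondOrder

variable {E F : Type*} [NormedAddCommGroup E] [NormedSpace ℝ E]
  [NormedAddCommGroup F] [NormedSpace ℝ F]

theorem isLittleO_taylor_two {f : E → F} {f' : E → E →L[ℝ] F} {f'' : E →L[ℝ] E →L[ℝ] F} {x₀ : E}
    (hf : ∀ᶠ x in 𝓝 x₀, HasFDerivAt f (f' x) x) (hf' : HasFDerivAt f' f'' x₀) :
    (fun x ↦ f x - f x₀ - f' x₀ (x - x₀) - (1 / 2 : ℝ) • f'' (x - x₀) (x - x₀))
      =o[𝓝 x₀] fun x ↦ ‖x - x₀‖ ^ 2 := by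
  refine IsLittleO.of_bound fun ε hε ↦ ?_
  obtain ⟨η, hη, hball⟩ := Metric.eventually_nhds_iff_ball.1 (hf.and (hf'.isLittleO.def hε))
  filter_upwards [Metric.ball_mem_nhds x₀ hη] with x hx
  set h := x - x₀ with h_def
  have segment_mem : ∀ t ∈ Set.Icc (0 : ℝ) 1, x₀ + t • h ∈ Metric.ball x₀ η := fun t ht ↦
    (convex_ball x₀ η).add_smul_sub_mem (Metric.mem_ball_self hη) hx ht
  -- Working along the segment from `x₀` to `x` avoids using symmetry of the second derivative.
  let g : ℝ → F := fun t ↦ f (x₀ + t • h) - t • f' x₀ h - (t ^ 2 / 2) • f'' h h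
  have hg : ∀ t ∈ Set.Icc (0 : ℝ) 1, HasDerivWithinAt g
      (f' (x₀ + t • h) h - f' x₀ h - t • f'' h h) (Set.Icc 0 1) t := by
    intro t ht
    have line : HasDerivAt (fun t : ℝ ↦ x₀ + t • h) h t := by
      simpa using ((hasDerivAt_id t).smul_const h).const_add x₀
    have linear : HasDerivAt (fun t : ℝ ↦ t • f' x₀ h) (f' x₀ h) t := by
      simpa using (hasDerivAt_id t).smul_const (f' x₀ h)
    have quadratic : HasDerivAt (fun t : ℝ ↦ (t ^ 2 / 2) • f'' h h) (t • f'' h h) t := by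
      simpa using ((hasDerivAt_pow 2 t).div_const 2).smul_const (f'' h h)
    exact ((((hball _ (segment_mem t ht)).1.comp_hasDerivAt t line).sub linear).sub
      quadratic).hasDerivWithinAt
  have hg_bound : ∀ t ∈ Set.Ico (0 : ℝ) 1,
      ‖f' (x₀ + t • h) h - f' x₀ h - t • f'' h h‖ ≤ ε * ‖h‖ ^ 2 := by
    intro t ht
    have bound := (hball _ (segment_mem t (Set.Ico_subset_Icc_self ht))).2
    rw [add_sub_cancel_left, norm_smul, Real.norm_of_nonneg ht.1] at bound
    calc ‖f' (x₀ + t • h) h - f' x₀ h - t • f'' h h‖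
        = ‖(f' (x₀ + t • h) - f' x₀ - f'' (t • h)) h‖ := by simp
      _ ≤ ε * (t * ‖h‖) * ‖h‖ := ContinuousLinearMap.le_of_opNorm_le _ bound h
      _ ≤ ε * (1 * ‖h‖) * ‖h‖ := by gcongr; exact ht.2.le
      _ = ε * ‖h‖ ^ 2 := by ring
  have hx_eq : x₀ + h = x := by rw [h_def, add_sub_cancel]
  simpa [g, hx_eq, sub_right_comm _ (f x₀)] using
    norm_image_sub_le_of_norm_deriv_le_segment_01' hg hg_bound

theorem isCoercive_of_forall_pos [FiniteDimensional ℝ E] {B : E →L[ℝ] E →L[ℝ] ℝ}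
    (hB : ∀ u, u ≠ 0 → 0 < B u u) : IsCoercive B := by
  rcases subsingleton_or_nontrivial E with _ | _
  · exact ⟨1, one_pos, fun u ↦ by simp [Subsingleton.elim u 0]⟩
  obtain ⟨u₀, hu₀, hmin⟩ := (isCompact_sphere (0 : E) 1).exists_isMinOn
    (NormedSpace.sphere_nonempty.2 zero_le_one) (f := fun u ↦ B u u) (by fun_prop)
  refine ⟨B u₀ u₀, hB u₀ (ne_zero_of_mem_unit_sphere ⟨u₀, hu₀⟩), fun u ↦ ?_⟩
  rcases eq_or_ne u 0 with rfl | hu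
  · simp
  have hle : B u₀ u₀ ≤ B (‖u‖⁻¹ • u) (‖u‖⁻¹ • u) := hmin (by simp [norm_smul, hu])
  calc B u₀ u₀ * ‖u‖ * ‖u‖ ≤ B (‖u‖⁻¹ • u) (‖u‖⁻¹ • u) * ‖u‖ * ‖u‖ := by gcongr
    _ = B u u := by
      have : ‖u‖ ≠ 0 := norm_ne_zero_iff.2 hu
      simp only [map_smul, smul_apply, smul_eq_mul]
      field_simp

theorem exists_eventually_quadratic_bounds {f : E → ℝ} {x₀ : E} (hf : ContDiffAt ℝ 2 f x₀)
    (hgrad : fderiv ℝ f x₀ = 0) (hcoer : IsCoercive (-fderiv ℝ (fderiv ℝ f) x₀)) :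
    ∃ c C : ℝ, 0 < c ∧ 0 < C ∧ ∀ᶠ x in 𝓝 x₀,
      -(C * ‖x - x₀‖ ^ 2) ≤ f x - f x₀ ∧ f x - f x₀ ≤ -(c * ‖x - x₀‖ ^ 2) := by
  set D := fderiv ℝ (fderiv ℝ f) x₀
  obtain ⟨c, hc, hD⟩ := hcoer
  have hf₁ : ∀ᶠ x in 𝓝 x₀, HasFDerivAt f (fderiv ℝ f x) x :=
    (hf.eventually (by simp)).mono fun x hx ↦ (hx.differentiableAt (by simp)).hasFDerivAt
  have hf₂ : HasFDerivAt (fderiv ℝ f) D x₀ :=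
    ((hf.fderiv_right (m := 1) (by norm_num)).differentiableAt (by simp)).hasFDerivAt
  refine ⟨c / 4, c / 4 + ‖D‖ / 2, by positivity, by positivity, ?_⟩
  filter_upwards [(isLittleO_taylor_two hf₁ hf₂).def (show 0 < c / 4 by positivity)] with x hx
  have remainder := abs_le.1 hx
  simp only [hgrad, zero_apply, sub_zero, smul_eq_mul, norm_pow, norm_norm] at remainder
  have hD_le : D (x - x₀) (x - x₀) ≤ -(c * ‖x - x₀‖ ^ 2) := by
    have := hD (x - x₀)
    simp only [neg_apply] at this
    linarith
  have hD_ge : -(‖D‖ * ‖x - x₀‖ ^ 2) ≤ D (x - x₀) (x - x₀) := by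
    have := (abs_le.1 (D.le_opNorm₂ (x - x₀) (x - x₀))).1
    linarith
  constructor <;> linarith [remainder.1, remainder.2]

end SecondOrder

section EuclideanBounds

variable {ι : Type*} [Fintype ι]

theorem pi_norm_le_sqrt_sum_sq (u : ι → ℝ) : ‖u‖ ≤ √(∑ j, u j ^ 2) :=
  (pi_norm_le_iff_of_nonneg (Real.sqrt_nonneg _)).2 fun j ↦ Real.abs_le_sqrt <|
    single_le_sum (f := fun j ↦ u j ^ 2) (fun _ _ ↦ sq_nonneg _) (mem_univ j)

theorem sum_sq_le_card_mul_norm_sq (u : ι → ℝ) : ∑ j, u j ^ 2 ≤ Fintype.card ι * ‖u‖ ^ 2 := by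
  calc ∑ j, u j ^ 2 ≤ ∑ _j : ι, ‖u‖ ^ 2 :=
        sum_le_sum fun j _ ↦ sq_le_sq.2 (by simpa using norm_le_pi_norm u j)
    _ = Fintype.card ι * ‖u‖ ^ 2 := by simp

theorem exists_eventually_euclidean_quadratic_bounds {f : (ι → ℝ) → ℝ} {x₀ : ι → ℝ}
    (hf : ContDiffAt ℝ 2 f x₀) (hgrad : fderiv ℝ f x₀ = 0)
    (hhess : ∀ u : ι → ℝ, u ≠ 0 → iteratedFDeriv ℝ 2 f x₀ ![u, u] < 0) :
    ∃ c C : ℝ, 0 < c ∧ 0 < C ∧ ∀ᶠ x in 𝓝 x₀,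
      -(C * ∑ j, (x j - x₀ j) ^ 2) ≤ f x - f x₀ ∧
        f x - f x₀ ≤ -(c * ∑ j, (x j - x₀ j) ^ 2) := by
  have hcoer : IsCoercive (-fderiv ℝ (fderiv ℝ f) x₀) := isCoercive_of_forall_pos fun u hu ↦ by
    simpa [iteratedFDeriv_two_apply] using hhess u hu
  obtain ⟨c, C, hc, hC, hbounds⟩ := exists_eventually_quadratic_bounds hf hgrad hcoer
  refine ⟨c / (Fintype.card ι + 1), C, by positivity, hC, ?_⟩
  filter_upwards [hbounds] with x ⟨hlower, hupper⟩
  have norm_sq_le : ‖x - x₀‖ ^ 2 ≤ ∑ j, (x j - x₀ j) ^ 2 :=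
    (Real.le_sqrt (norm_nonneg _) (by positivity)).1 (pi_norm_le_sqrt_sum_sq (x - x₀))
  have sum_sq_le : ∑ j, (x j - x₀ j) ^ 2 ≤ (Fintype.card ι + 1) * ‖x - x₀‖ ^ 2 :=
    (sum_sq_le_card_mul_norm_sq (x - x₀)).trans (by gcongr; simp)
  constructor
  · exact hlower.trans' (by gcongr)
  · refine hupper.trans (neg_le_neg ?_)
    calc c / (Fintype.card ι + 1) * ∑ j, (x j - x₀ j) ^ 2
        ≤ c / (Fintype.card ι + 1) * ((Fintype.card ι + 1) * ‖x - x₀‖ ^ 2) := by gcongr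
      _ = c * ‖x - x₀‖ ^ 2 := by field_simp

end EuclideanBounds

section IntegerPoints

theorem sub_sub_one_le_card_Icc_ceil_floor (x y : ℝ) : y - x - 1 ≤ #(Icc ⌈x⌉ ⌊y⌋) := by
  have toNat_ge : ((⌊y⌋ + 1 - ⌈x⌉ : ℤ) : ℝ) ≤ #(Icc ⌈x⌉ ⌊y⌋) := by
    rw [Int.card_Icc]
    exact_mod_cast Int.self_le_toNat _
  push_cast at toNat_ge
  linarith [Int.lt_floor_add_one y, Int.ceil_lt_add_one x]

theorem card_Icc_ceil_floor_le {x y : ℝ} (hxy : x ≤ y) : (#(Icc ⌈x⌉ ⌊y⌋) : ℝ) ≤ y - x + 1 := by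
  rw [Int.card_Icc, ← Int.cast_natCast, Int.toNat_eq_max]
  push_cast
  refine max_le ?_ (by linarith)
  linarith [Int.floor_le y, Int.le_ceil x]

theorem card_filter_floor_div_eq_le (S : Finset ℤ) (a : ℝ) {s : ℝ} (hs : 1 ≤ s) (j : ℤ) :
    (#{k ∈ S | ⌊(Int.cast k - a) / s⌋ = j} : ℝ) ≤ 2 * s := by
  have hs₀ : 0 < s := by linarith
  have hsub : {k ∈ S | ⌊(Int.cast k - a) / s⌋ = j} ⊆ Icc ⌈a + j * s⌉ ⌊a + (j + 1) * s⌋ := by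
    intro k hk
    obtain ⟨hlower, hupper⟩ := Int.floor_eq_iff.1 (mem_filter.1 hk).2
    rw [le_div_iff₀ hs₀] at hlower
    rw [div_lt_iff₀ hs₀] at hupper
    rw [mem_Icc, Int.ceil_le, Int.le_floor]
    constructor <;> linarith
  calc (#{k ∈ S | ⌊(Int.cast k - a) / s⌋ = j} : ℝ)
      ≤ #(Icc ⌈a + j * s⌉ ⌊a + (j + 1) * s⌋) := by exact_mod_cast card_le_card hsub
    _ ≤ a + (j + 1) * s - (a + j * s) + 1 := card_Icc_ceil_floor_le (by linarith)
    _ ≤ 2 * s := by linarith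

theorem exists_finset_forall_abs_sub_le {ι : Type*} [Fintype ι] (x : ι → ℝ) {t : ℝ} (ht : 1 ≤ t) :
    ∃ Q : Finset (ι → ℤ), t ^ Fintype.card ι ≤ #Q ∧ ∀ m ∈ Q, ∀ j, |(m j : ℝ) - x j| ≤ t := by
  classical
  refine ⟨Fintype.piFinset fun j ↦ Icc ⌈x j - t⌉ ⌊x j + t⌋, ?_, fun m hm j ↦ ?_⟩
  · rw [Fintype.card_piFinset, Nat.cast_prod, ← card_univ, ← prod_const]
    refine prod_le_prod (fun _ _ ↦ by positivity) fun j _ ↦ ?_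
    exact (sub_sub_one_le_card_Icc_ceil_floor _ _).trans' (by linarith)
  · have hmj := Fintype.mem_piFinset.1 hm j
    rw [mem_Icc, Int.ceil_le, Int.le_floor] at hmj
    exact abs_le.2 ⟨by linarith [hmj.1], by linarith [hmj.2]⟩

end IntegerPoints

section GaussianSums

theorem summable_exp_neg_mul_int_sq {b : ℝ} (hb : 0 < b) :
    Summable fun j : ℤ ↦ Real.exp (-b * (j : ℝ) ^ 2) := by
  refine (summable_pow_mul_jacobiTheta₂_term_bound 0 (div_pos hb Real.pi_pos) 0).congr fun j ↦ ?_
  field_simp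
  simp

theorem exp_neg_mul_sq_le_floor {b : ℝ} (hb : 0 ≤ b) (x : ℝ) :
    Real.exp (-b * x ^ 2) ≤ Real.exp b * Real.exp (-(b / 2) * (⌊x⌋ : ℝ) ^ 2) := by
  rw [← Real.exp_add, Real.exp_le_exp]
  have hfloor : (⌊x⌋ : ℝ) ^ 2 ≤ 2 * x ^ 2 + 2 := by
    have : (x - ⌊x⌋) ^ 2 ≤ 1 := by nlinarith [Int.floor_le x, Int.lt_floor_add_one x]
    nlinarith [sq_nonneg (2 * x - ⌊x⌋)]
  nlinarith

-- The terms are grouped by the unit interval containing `(k - a) / s`; each group has `O(s)` terms.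
theorem exists_sum_exp_neg_mul_sq_le {b : ℝ} (hb : 0 < b) :
    ∃ K : ℝ, ∀ s : ℝ, 1 ≤ s → ∀ (a : ℝ) (S : Finset ℤ),
      ∑ k ∈ S, Real.exp (-b * (((k : ℝ) - a) / s) ^ 2) ≤ K * s := by
  have hsum := summable_exp_neg_mul_int_sq (half_pos hb)
  set T := ∑' j : ℤ, Real.exp (-(b / 2) * (j : ℝ) ^ 2)
  refine ⟨2 * Real.exp b * T, fun s hs a S ↦ ?_⟩
  let cell : ℤ → ℤ := fun k ↦ ⌊((k : ℝ) - a) / s⌋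
  have cell_sum_le : ∀ j ∈ S.image cell, ∑ k ∈ S with cell k = j,
      Real.exp (-b * (((k : ℝ) - a) / s) ^ 2) ≤
        2 * s * Real.exp b * Real.exp (-(b / 2) * (j : ℝ) ^ 2) := by
    intro j _
    calc ∑ k ∈ S with cell k = j, Real.exp (-b * (((k : ℝ) - a) / s) ^ 2)
        ≤ #{k ∈ S | cell k = j} • (Real.exp b * Real.exp (-(b / 2) * (j : ℝ) ^ 2)) :=
          sum_le_card_nsmul _ _ _ fun k hk ↦ by
            rw [← (mem_filter.1 hk).2]
            exact exp_neg_mul_sq_le_floor hb.le _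
      _ ≤ 2 * s * (Real.exp b * Real.exp (-(b / 2) * (j : ℝ) ^ 2)) := by
          rw [nsmul_eq_mul]
          gcongr
          exact card_filter_floor_div_eq_le S a hs j
      _ = 2 * s * Real.exp b * Real.exp (-(b / 2) * (j : ℝ) ^ 2) := by ring
  calc ∑ k ∈ S, Real.exp (-b * (((k : ℝ) - a) / s) ^ 2)
      = ∑ j ∈ S.image cell, ∑ k ∈ S with cell k = j, Real.exp (-b * (((k : ℝ) - a) / s) ^ 2) :=
        (sum_fiberwise_of_maps_to (fun k hk ↦ mem_image_of_mem cell hk) _).symm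
    _ ≤ ∑ j ∈ S.image cell, 2 * s * Real.exp b * Real.exp (-(b / 2) * (j : ℝ) ^ 2) :=
        sum_le_sum cell_sum_le
    _ = 2 * s * Real.exp b * ∑ j ∈ S.image cell, Real.exp (-(b / 2) * (j : ℝ) ^ 2) :=
        (mul_sum ..).symm
    _ ≤ 2 * s * Real.exp b * T := by
        gcongr
        exact hsum.sum_le_tsum _ fun _ _ ↦ (Real.exp_pos _).le
    _ = 2 * Real.exp b * T * s := by ring

variable {ι : Type*} [Fintype ι]

theorem sum_prod_apply_le_prod {κ : Type*} {g : ι → κ → ℝ} {M : ι → ℝ} (hg : ∀ j k, 0 ≤ g j k)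
    (hM : ∀ j (S : Finset κ), ∑ k ∈ S, g j k ≤ M j) (S : Finset (ι → κ)) :
    ∑ m ∈ S, ∏ j, g j (m j) ≤ ∏ j, M j := by
  classical
  calc ∑ m ∈ S, ∏ j, g j (m j)
      ≤ ∑ m ∈ Fintype.piFinset fun j ↦ S.image (· j), ∏ j, g j (m j) :=
        sum_le_sum_of_subset_of_nonneg
          (fun m hm ↦ Fintype.mem_piFinset.2 fun j ↦ mem_image_of_mem (· j) hm)
          fun _ _ _ ↦ prod_nonneg fun j _ ↦ hg j _
    _ = ∏ j, ∑ k ∈ S.image (· j), g j k := (prod_univ_sum ..).symm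
    _ ≤ ∏ j, M j := prod_le_prod (fun j _ ↦ sum_nonneg fun k _ ↦ hg j k) fun j _ ↦ hM j _

theorem exists_sum_exp_neg_mul_sum_sq_le {b : ℝ} (hb : 0 < b) :
    ∃ K : ℝ, ∀ s : ℝ, 1 ≤ s → ∀ (a : ι → ℝ) (S : Finset (ι → ℤ)),
      ∑ m ∈ S, Real.exp (-b * ∑ j, (((m j : ℝ) - a j) / s) ^ 2) ≤ (K * s) ^ Fintype.card ι := by
  obtain ⟨K, hsum⟩ := exists_sum_exp_neg_mul_sq_le hb
  refine ⟨K, fun s hs a S ↦ ?_⟩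
  simp_rw [mul_sum, Real.exp_sum]
  calc ∑ m ∈ S, ∏ j, Real.exp (-b * (((m j : ℝ) - a j) / s) ^ 2) ≤ ∏ _j : ι, K * s :=
        sum_prod_apply_le_prod (g := fun j (k : ℤ) ↦ Real.exp (-b * (((k : ℝ) - a j) / s) ^ 2))
          (fun _ _ ↦ (Real.exp_pos _).le) (fun j ↦ hsum s hs (a j)) S
    _ = (K * s) ^ Fintype.card ι := by simp

end GaussianSums

section Laplace

variable {ι : Type*} [Fintype ι]

/-- The lattice points `m ∈ ℤ^ι` whose rescaling `m / n` lies in the closed Euclidean ball of radius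
`R` around `δ`. The Euclidean norm is written out since `ι → ℝ` carries the supremum norm. -/
def latticeWindow (δ : ι → ℝ) (n : ℕ) (R : ℝ) : Set (ι → ℤ) :=
  {m | √(∑ j, ((m j : ℝ) / n - δ j) ^ 2) ≤ R}

/-- The summand `e^{n q ψ(m/n)}` of the discrete Laplace sum, cut off to the lattice window of
radius `R` around `δ`. -/
noncomputable def laplaceWeight (ψ : (ι → ℝ) → ℝ) (q : ℝ) (δ : ι → ℝ) (n : ℕ) (R : ℝ) :
    (ι → ℤ) → ℝ :=
  (latticeWindow δ n R).indicator fun m ↦ Real.exp (n * q * ψ fun j ↦ (m j : ℝ) / n)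

variable {ψ : (ι → ℝ) → ℝ} {q : ℝ} {δ : ι → ℝ} {n : ℕ} {R : ℝ}

theorem laplaceWeight_nonneg : 0 ≤ laplaceWeight ψ q δ n R :=
  Set.indicator_nonneg fun _ _ ↦ (Real.exp_pos _).le

theorem mem_latticeWindow_iff_sum_sq_le (hR : 0 ≤ R) {m : ι → ℤ} :
    m ∈ latticeWindow δ n R ↔ ∑ j, ((m j : ℝ) / n - δ j) ^ 2 ≤ R ^ 2 :=
  Real.sqrt_le_left hR

theorem latticeWindow_mono {R' : ℝ} (h : R ≤ R') : latticeWindow δ n R ⊆ latticeWindow δ n R' :=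
  fun _ hm ↦ le_trans hm h

theorem eventually_forall_mem_latticeWindow {p : (ι → ℝ) → Prop} (hp : ∀ᶠ x in 𝓝 δ, p x)
    {ρ : ℕ → ℝ} (hρ : Tendsto ρ atTop (𝓝 0)) :
    ∀ᶠ n in atTop, ∀ m ∈ latticeWindow δ n (ρ n), p fun j ↦ (m j : ℝ) / n := by
  obtain ⟨ε, hε, hball⟩ := Metric.eventually_nhds_iff_ball.1 hp
  filter_upwards [hρ.eventually_lt_const hε] with n hn m hm
  refine hball _ (mem_ball_iff_norm.2 ?_)
  exact ((pi_norm_le_sqrt_sum_sq _).trans hm).trans_lt hn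

theorem exists_finset_subset_latticeWindow (δ : ι → ℝ) (hn : 0 < n) {T : ℝ}
    (hT : √(Fintype.card ι + 1) ≤ T) :
    ∃ Q : Finset (ι → ℤ), ↑Q ⊆ latticeWindow δ n (T / n) ∧
      (T / √(Fintype.card ι + 1)) ^ Fintype.card ι ≤ #Q := by
  have hcard : 0 < √(Fintype.card ι + 1 : ℝ) := by positivity
  obtain ⟨Q, hQ_card, hQ⟩ := exists_finset_forall_abs_sub_le (fun j ↦ n * δ j)
    ((one_le_div hcard).2 hT)
  refine ⟨Q, fun m hm ↦ ?_, hQ_card⟩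
  have hT₀ : 0 ≤ T := hcard.le.trans hT
  rw [mem_latticeWindow_iff_sum_sq_le (by positivity)]
  have coord_le : ∀ j, ((m j : ℝ) / n - δ j) ^ 2 ≤ (T / n) ^ 2 / (Fintype.card ι + 1) := by
    intro j
    calc ((m j : ℝ) / n - δ j) ^ 2 = |(m j : ℝ) - n * δ j| ^ 2 / n ^ 2 := by
          rw [sq_abs]
          field_simp
      _ ≤ (T / √(Fintype.card ι + 1)) ^ 2 / n ^ 2 := by gcongr; exact hQ m hm j
      _ = (T / n) ^ 2 / (Fintype.card ι + 1) := by
          rw [div_pow, Real.sq_sqrt (by positivity)]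
          field_simp
  calc ∑ j, ((m j : ℝ) / n - δ j) ^ 2
      ≤ ∑ _j : ι, (T / n) ^ 2 / (Fintype.card ι + 1) := sum_le_sum fun j _ ↦ coord_le j
    _ = Fintype.card ι / (Fintype.card ι + 1) * (T / n) ^ 2 := by
        rw [sum_const, card_univ, nsmul_eq_mul]
        ring
    _ ≤ (T / n) ^ 2 :=
        mul_le_of_le_one_left (by positivity) (div_le_one_of_le₀ (by simp) (by positivity))

theorem exists_sum_laplaceWeight_le (ψ : (ι → ℝ) → ℝ) (δ : ι → ℝ) (hq : 0 < q) {c : ℝ}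
    (hc : 0 < c) :
    ∃ B : ℝ, ∀ (n : ℕ) (R : ℝ), 0 < n →
      (∀ m ∈ latticeWindow δ n R, (ψ fun j ↦ (m j : ℝ) / n) - ψ δ ≤
        -(c * ∑ j, ((m j : ℝ) / n - δ j) ^ 2)) →
      ∀ S : Finset (ι → ℤ), ∑ m ∈ S, laplaceWeight ψ q δ n R m ≤
        B * √n ^ Fintype.card ι * Real.exp (n * q * ψ δ) := by
  obtain ⟨K, hgauss⟩ := exists_sum_exp_neg_mul_sum_sq_le (ι := ι) (mul_pos hq hc)
  refine ⟨K ^ Fintype.card ι, fun n R hn hψ S ↦ ?_⟩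
  have hn_one : (1 : ℝ) ≤ n := by exact_mod_cast hn
  have weight_le (m : ι → ℤ) : laplaceWeight ψ q δ n R m ≤ Real.exp (n * q * ψ δ) *
      Real.exp (-(q * c) * ∑ j, (((m j : ℝ) - n * δ j) / √n) ^ 2) := by
    refine Set.indicator_apply_le' (fun hm ↦ ?_) fun _ ↦ by positivity
    have rescale : ∑ j, (((m j : ℝ) - n * δ j) / √n) ^ 2 =
        n * ∑ j, ((m j : ℝ) / n - δ j) ^ 2 := by
      rw [mul_sum]
      refine sum_congr rfl fun j _ ↦ ?_
      rw [div_pow, Real.sq_sqrt (by positivity)]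
      field_simp
    rw [rescale, ← Real.exp_add, Real.exp_le_exp]
    have := mul_le_mul_of_nonneg_left (hψ m hm) (by positivity : 0 ≤ n * q)
    linarith
  calc ∑ m ∈ S, laplaceWeight ψ q δ n R m
      ≤ ∑ m ∈ S, Real.exp (n * q * ψ δ) *
          Real.exp (-(q * c) * ∑ j, (((m j : ℝ) - n * δ j) / √n) ^ 2) :=
        sum_le_sum fun m _ ↦ weight_le m
    _ = Real.exp (n * q * ψ δ) *
          ∑ m ∈ S, Real.exp (-(q * c) * ∑ j, (((m j : ℝ) - n * δ j) / √n) ^ 2) :=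
        (mul_sum ..).symm
    _ ≤ Real.exp (n * q * ψ δ) * (K * √n) ^ Fintype.card ι := by
        gcongr
        exact hgauss _ (Real.one_le_sqrt.2 hn_one) (fun j ↦ n * δ j) S
    _ = K ^ Fintype.card ι * √n ^ Fintype.card ι * Real.exp (n * q * ψ δ) := by ring

theorem exists_le_sum_laplaceWeight (hq : 0 ≤ q) {C a : ℝ} (hC : 0 ≤ C) (hn : 0 < n)
    (hn_large : √(Fintype.card ι + 1) ≤ a * √n) (hR : a / √n ≤ R)
    (hψ : ∀ m ∈ latticeWindow δ n R,
      -(C * ∑ j, ((m j : ℝ) / n - δ j) ^ 2) ≤ (ψ fun j ↦ (m j : ℝ) / n) - ψ δ) :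
    ∃ Q : Finset (ι → ℤ), Real.exp (-(q * C * a ^ 2)) *
      (a / √(Fintype.card ι + 1)) ^ Fintype.card ι * √n ^ Fintype.card ι *
        Real.exp (n * q * ψ δ) ≤ ∑ m ∈ Q, laplaceWeight ψ q δ n R m := by
  obtain ⟨Q, hQ_window, hQ_card⟩ := exists_finset_subset_latticeWindow δ hn hn_large
  have hn₀ : (0 : ℝ) < n := by exact_mod_cast hn
  have hradius : a * √n / n = a / √n := by rw [mul_div_assoc, Real.sqrt_div_self', mul_one_div]
  have ha : 0 ≤ a / √n := by
    rw [← hradius]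
    exact div_nonneg ((Real.sqrt_nonneg _).trans hn_large) hn₀.le
  rw [hradius] at hQ_window
  refine ⟨Q, ?_⟩
  have le_weight : ∀ m ∈ Q, Real.exp (-(q * C * a ^ 2)) * Real.exp (n * q * ψ δ) ≤
      laplaceWeight ψ q δ n R m := by
    intro m hm
    have hm_window := latticeWindow_mono hR (hQ_window hm)
    have sum_sq_le := (mem_latticeWindow_iff_sum_sq_le ha).1 (hQ_window hm)
    rw [laplaceWeight, Set.indicator_of_mem hm_window, ← Real.exp_add, Real.exp_le_exp]
    have hlower : -(C * (a / √n) ^ 2) ≤ (ψ fun j ↦ (m j : ℝ) / n) - ψ δ :=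
      (hψ m hm_window).trans' (by gcongr)
    have hscaled := mul_le_mul_of_nonneg_left hlower (by positivity : 0 ≤ n * q)
    have hcancel : n * q * -(C * (a / √n) ^ 2) = -(q * C * a ^ 2) := by
      rw [div_pow, Real.sq_sqrt hn₀.le]
      field_simp
    linarith
  calc _ = (a * √n / √(Fintype.card ι + 1)) ^ Fintype.card ι *
          (Real.exp (-(q * C * a ^ 2)) * Real.exp (n * q * ψ δ)) := by
        rw [mul_div_right_comm, mul_pow]
        ring
    _ ≤ #Q * (Real.exp (-(q * C * a ^ 2)) * Real.exp (n * q * ψ δ)) := by gcongr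
    _ = #Q • (Real.exp (-(q * C * a ^ 2)) * Real.exp (n * q * ψ δ)) := (nsmul_eq_mul ..).symm
    _ ≤ ∑ m ∈ Q, laplaceWeight ψ q δ n R m := card_nsmul_le_sum _ _ _ le_weight

theorem stmt_14_general {δ₀ : ι → ℝ} (hψ : ContDiffAt ℝ 2 ψ δ₀) (hgrad : fderiv ℝ ψ δ₀ = 0)
    (hhess : ∀ u : ι → ℝ, u ≠ 0 → iteratedFDeriv ℝ 2 ψ δ₀ ![u, u] < 0) (hq : 0 < q)
    {ρ : ℕ → ℝ} (hρ : Tendsto ρ atTop (𝓝 0)) {a : ℝ} (ha : 0 < a)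
    (haρ : ∀ᶠ n : ℕ in atTop, a / √n ≤ ρ n) :
    ∃ A B : ℝ, ∃ N : ℕ, 0 < A ∧ A ≤ B ∧ ∀ n : ℕ, N ≤ n →
      A * (n : ℝ) ^ ((Fintype.card ι : ℝ) / 2) * Real.exp (n * q * ψ δ₀) ≤
          ∑' m, laplaceWeight ψ q δ₀ n (ρ n) m ∧
        ∑' m, laplaceWeight ψ q δ₀ n (ρ n) m ≤
          B * (n : ℝ) ^ ((Fintype.card ι : ℝ) / 2) * Real.exp (n * q * ψ δ₀) := by
  obtain ⟨c, C, hc, hC, hquad⟩ := exists_eventually_euclidean_quadratic_bounds hψ hgrad hhess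
  obtain ⟨B, hupper⟩ := exists_sum_laplaceWeight_le ψ δ₀ hq hc
  have hlarge : ∀ᶠ n : ℕ in atTop, √(Fintype.card ι + 1) ≤ a * √n :=
    ((Real.tendsto_sqrt_atTop.comp tendsto_natCast_atTop_atTop).const_mul_atTop
      ha).eventually_ge_atTop _
  obtain ⟨N, hN⟩ := eventually_atTop.1 <| (eventually_forall_mem_latticeWindow hquad hρ).and <|
    haρ.and <| hlarge.and <| eventually_gt_atTop 0
  set A := Real.exp (-(q * C * a ^ 2)) * (a / √(Fintype.card ι + 1)) ^ Fintype.card ι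
  refine ⟨A, max A B, N, by positivity, le_max_left _ _, fun n hn ↦ ?_⟩
  obtain ⟨hwindow, hradius, hn_large, hn_pos⟩ := hN n hn
  rw [Real.rpow_div_two_eq_sqrt _ n.cast_nonneg, Real.rpow_natCast]
  have hsum_le := hupper n (ρ n) hn_pos fun m hm ↦ (hwindow m hm).2
  have hsummable := summable_of_sum_le laplaceWeight_nonneg hsum_le
  obtain ⟨Q, hQ⟩ := exists_le_sum_laplaceWeight hq.le hC.le hn_pos hn_large hradius
    fun m hm ↦ (hwindow m hm).1
  constructor
  · exact hQ.trans (hsummable.sum_le_tsum Q fun m _ ↦ laplaceWeight_nonneg m)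
  · exact (hsummable.tsum_le_of_sum_le hsum_le).trans (by gcongr; exact le_max_right _ _)

end Laplace

theorem tendsto_natCast_rpow_neg_half_add {γ : ℝ} (hγ : γ < 1 / 2) :
    Tendsto (fun n : ℕ ↦ (n : ℝ) ^ (-(1 : ℝ) / 2 + γ)) atTop (𝓝 0) := by
  have h := (tendsto_rpow_neg_atTop (sub_pos.2 hγ)).comp tendsto_natCast_atTop_atTop
  exact h.congr fun n ↦ congrArg ((n : ℝ) ^ ·) (by ring)

theorem one_div_sqrt_le_rpow_neg_half_add {x γ : ℝ} (hx : 1 ≤ x) (hγ : 0 ≤ γ) :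
    1 / √x ≤ x ^ (-(1 : ℝ) / 2 + γ) := by
  rw [Real.sqrt_eq_rpow, one_div, ← Real.rpow_neg (by linarith)]
  exact Real.rpow_le_rpow_of_exponent_le hx (by linarith)

/-- Discrete Laplace-method asymptotic from the proof of Theorem 2.1: if `ψ` is
`C³` near `δ₀` with `∇ψ(δ₀) = 0` and negative definite Hessian at `δ₀`, then for
`q > 0` and `0 < γ < 1/6`,
`Σ_{m ∈ ℤ^r, ‖m/n − δ₀‖ ≤ n^{−1/2+γ}} e^{n q ψ(m/n)} ≍ n^{r/2} e^{n q ψ(δ₀)}`. -/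
theorem stmt_14 (r : ℕ) (U : Set (Fin r → ℝ)) (hU : IsOpen U)
    (δ₀ : Fin r → ℝ) (hδ₀ : δ₀ ∈ U)
    (ψ : (Fin r → ℝ) → ℝ) (hψ : ContDiffOn ℝ 3 ψ U)
    (hgrad : fderiv ℝ ψ δ₀ = 0)
    (hhess : ∀ u : Fin r → ℝ, u ≠ 0 → iteratedFDeriv ℝ 2 ψ δ₀ ![u, u] < 0)
    (q : ℝ) (hq : 0 < q) (γ : ℝ) (hγ0 : 0 < γ) (hγ1 : γ < 1 / 6) :
    ∃ A B : ℝ, ∃ N : ℕ, 0 < A ∧ A ≤ B ∧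
      ∀ n : ℕ, N ≤ n →
        A * (n : ℝ) ^ ((r : ℝ) / 2) * Real.exp (n * q * ψ δ₀) ≤
            (∑' m : Fin r → ℤ,
              Set.indicator
                {m : Fin r → ℤ |
                  Real.sqrt (∑ j, ((m j : ℝ) / n - δ₀ j) ^ 2) ≤ (n : ℝ) ^ (-(1 : ℝ) / 2 + γ)}
                (fun m => Real.exp (n * q * ψ (fun j => (m j : ℝ) / n))) m) ∧
          (∑' m : Fin r → ℤ,
              Set.indicator
                {m : Fin r → ℤ |
                  Real.sqrt (∑ j, ((m j : ℝ) / n - δ₀ j) ^ 2) ≤ (n : ℝ) ^ (-(1 : ℝ) / 2 + γ)}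
                (fun m => Real.exp (n * q * ψ (fun j => (m j : ℝ) / n))) m) ≤
            B * (n : ℝ) ^ ((r : ℝ) / 2) * Real.exp (n * q * ψ δ₀) := by
  simpa only [Fintype.card_fin, laplaceWeight, latticeWindow] using stmt_14_general
    ((hψ.contDiffAt (hU.mem_nhds hδ₀)).of_le (by norm_num)) hgrad hhess hq
    (tendsto_natCast_rpow_neg_half_add (by linarith)) one_pos
    ((eventually_ge_atTop 1).mono fun n hn ↦
      one_div_sqrt_le_rpow_neg_half_add (by exact_mod_cast hn) hγ0.le)
end
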